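/- arXiv:2310.02134 — 4 statements merged into one kernel-verified Lean document; each statement's English description precedes it below -/
import Mathlib

section
/- Let α ∈ (0,1), q₀ > (1−α)/α (so that α(1+q₀) > 1), C_β > 0 and s ∈ (0,1]. Let φ : ℝ → ℝ be bounded and continuously differentiable with bounded derivative, and let β : (0,∞) → ℝ be continuously differentiable with |β(y)| ≤ C_β y^{−α q₀} for all y ≥ 1, and assume the function λ ↦ (α β(s^{−1/α} λ) − β′(s^{−1/α} λ) s^{−1/α} λ) λ^{−α−1} (φ(x+λ) − φ(x)) is Lebesgue integrable on (1,∞). Then for every x ∈ ℝ, | ∫_1^∞ (φ(x+λ) − φ(x)) (α β(s^{−1/α} λ) − β′(s^{−1/α} λ) s^{−1/α} λ) λ^{−α−1} dλ | ≤ 2 ‖φ‖_∞ |β(s^{−1/α})| + (C_β / (α(1+q₀) − 1)) ‖φ′‖_∞ s^{q₀}. -/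
open MeasureTheory Set Filter

/-!
With `c = s ^ (-1/α)` and `g l = β (c l) l ^ (-α)`, the kernel
`(α β(c l) - β'(c l) c l) l ^ (-α-1)` is exactly `-g' l`. Integrating by parts against
`φ (x + l) - φ x` leaves the boundary term at `1`, of size `|φ (x+1) - φ x| |β c|`, and the integral
of `g l φ' (x + l)`. Since `c ^ (-α q₀) = s ^ q₀`, the decay of `β` gives
`|g l| ≤ C s ^ q₀ l ^ (-α (1 + q₀))`, which is integrable because `α (1 + q₀) > 1`. The boundary
term at infinity vanishes because `φ` grows at most linearly.
-/

open scoped Topology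

section IntegrationByParts

theorem integrableOn_Ioi_of_norm_le_rpow {E : Type*} [NormedAddCommGroup E] {f : ℝ → E}
    {a C r : ℝ} (ha : 0 < a) (hr : 1 < r)
    (hmeas : AEStronglyMeasurable f (volume.restrict (Ioi a)))
    (hf : ∀ l ∈ Ioi a, ‖f l‖ ≤ C * l ^ (-r)) : IntegrableOn f (Ioi a) :=
  ((integrableOn_Ioi_rpow_of_lt (neg_lt_neg hr) ha).const_mul C).mono' hmeas
    (ae_restrict_of_forall_mem measurableSet_Ioi hf)

variable {E : Type*} [NormedAddCommGroup E] [NormedSpace ℝ E]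
  {f u u' : ℝ → E} {g g' : ℝ → ℝ} {a B C r : ℝ}

theorem isBigO_atTop_id_of_norm_deriv_le (hu : ∀ l ∈ Ici a, HasDerivAt u (u' l) l)
    (hu' : ∀ l ∈ Ici a, ‖u' l‖ ≤ B) : u =O[atTop] (id : ℝ → ℝ) := by
  have hsub : (fun l => u l - u a) =O[atTop] fun l => l - a := by
    refine .of_bound B ?_
    filter_upwards [eventually_ge_atTop a] with l hl
    rw [Real.norm_of_nonneg (sub_nonneg.2 hl)]
    exact norm_image_sub_le_of_norm_deriv_le_segment'
      (fun t ht => (hu t ht.1).hasDerivWithinAt) (fun t ht => hu' t ht.1) l (right_mem_Icc.2 hl)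
  have hid : (fun l => l - a) =O[atTop] (id : ℝ → ℝ) :=
    (Asymptotics.isBigO_refl id atTop).sub (Asymptotics.isLittleO_const_id_atTop a).isBigO
  simpa using (hsub.trans hid).add (Asymptotics.isLittleO_const_id_atTop (u a)).isBigO

theorem tendsto_smul_atTop_zero_of_isBigO_rpow (hr : 1 < r)
    (hg : g =O[atTop] fun l => l ^ (-r)) (hu : u =O[atTop] (id : ℝ → ℝ)) :
    Tendsto (fun l => g l • u l) atTop (𝓝 0) := by
  refine (hg.smul hu).trans_tendsto ?_
  refine (tendsto_rpow_neg_atTop (sub_pos.2 hr)).congr' ?_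
  filter_upwards [eventually_gt_atTop 0] with l hl
  rw [neg_sub', sub_neg_eq_add, Real.rpow_add_one hl.ne', smul_eq_mul, id]

theorem norm_integral_Ioi_le_of_norm_le_rpow (ha : 0 < a) (hr : 1 < r)
    (hf : ∀ l ∈ Ioi a, ‖f l‖ ≤ C * l ^ (-r)) :
    ‖∫ l in Ioi a, f l‖ ≤ C / (r - 1) * a ^ (1 - r) :=
  calc ‖∫ l in Ioi a, f l‖ ≤ ∫ l in Ioi a, C * l ^ (-r) :=
        norm_integral_le_of_norm_le
          ((integrableOn_Ioi_rpow_of_lt (neg_lt_neg hr) ha).const_mul C)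
          (ae_restrict_of_forall_mem measurableSet_Ioi hf)
    _ = C * (-a ^ (-r + 1) / (-r + 1)) := by
        rw [integral_const_mul, integral_Ioi_rpow_of_lt (neg_lt_neg hr) ha]
    _ = C / (r - 1) * a ^ (1 - r) := by
        rw [neg_add_eq_sub, ← neg_sub r 1, neg_div_neg_eq]
        ring

theorem aestronglyMeasurable_of_hasDerivAt [CompleteSpace E] {μ : Measure ℝ} {S : Set ℝ}
    (hS : MeasurableSet S) (hu : ∀ l ∈ S, HasDerivAt u (u' l) l) :
    AEStronglyMeasurable u' (μ.restrict S) :=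
  (stronglyMeasurable_deriv u).aestronglyMeasurable.congr
    (ae_restrict_of_forall_mem hS fun l hl => (hu l hl).deriv)

theorem integral_Ioi_deriv_smul_eq [CompleteSpace E]
    (hg : ∀ l ∈ Ici a, HasDerivAt g (g' l) l) (hu : ∀ l ∈ Ici a, HasDerivAt u (u' l) l)
    (hg'u : IntegrableOn (fun l => g' l • u l) (Ioi a))
    (hgu' : IntegrableOn (fun l => g l • u' l) (Ioi a))
    (hlim : Tendsto (fun l => g l • u l) atTop (𝓝 0)) :
    ∫ l in Ioi a, g' l • u l = -(g a • u a) - ∫ l in Ioi a, g l • u' l := by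
  have hFTC := integral_Ioi_of_hasDerivAt_of_tendsto'
    (fun l hl => (hg l hl).smul (hu l hl)) (hgu'.add hg'u) hlim
  rw [eq_sub_iff_add_eq', ← integral_add hgu' hg'u, ← zero_sub]
  exact hFTC

theorem norm_integral_Ioi_deriv_smul_le [CompleteSpace E] (ha : 0 < a) (hr : 1 < r)
    (hg : ∀ l ∈ Ici a, HasDerivAt g (g' l) l) (hu : ∀ l ∈ Ici a, HasDerivAt u (u' l) l)
    (hg_le : ∀ l ∈ Ici a, |g l| ≤ C * l ^ (-r)) (hu'_le : ∀ l ∈ Ici a, ‖u' l‖ ≤ B)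
    (hg'u : IntegrableOn (fun l => g' l • u l) (Ioi a)) :
    ‖∫ l in Ioi a, g' l • u l‖ ≤ ‖u a‖ * |g a| + C * B / (r - 1) * a ^ (1 - r) := by
  have hgu'_le : ∀ l ∈ Ioi a, ‖g l • u' l‖ ≤ C * B * l ^ (-r) := fun l hl =>
    have hl' : l ∈ Ici a := Ioi_subset_Ici_self hl
    calc ‖g l • u' l‖ = |g l| * ‖u' l‖ := norm_smul _ _
      _ ≤ C * l ^ (-r) * B :=
          mul_le_mul (hg_le l hl') (hu'_le l hl') (norm_nonneg _)
            ((abs_nonneg _).trans (hg_le l hl'))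
      _ = C * B * l ^ (-r) := by ring
  have hu'_meas : AEStronglyMeasurable u' (volume.restrict (Ioi a)) :=
    aestronglyMeasurable_of_hasDerivAt measurableSet_Ioi fun l hl => hu l (Ioi_subset_Ici_self hl)
  have hg_meas : AEStronglyMeasurable g (volume.restrict (Ioi a)) :=
    ContinuousOn.aestronglyMeasurable
      (fun l hl => (hg l (Ioi_subset_Ici_self hl)).continuousAt.continuousWithinAt)
      measurableSet_Ioi
  have hgu' : IntegrableOn (fun l => g l • u' l) (Ioi a) :=
    integrableOn_Ioi_of_norm_le_rpow ha hr (hg_meas.smul hu'_meas) hgu'_le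
  have hg_isBigO : g =O[atTop] fun l => l ^ (-r) := by
    refine .of_bound C ?_
    filter_upwards [eventually_ge_atTop a] with l hl
    rw [Real.norm_of_nonneg (Real.rpow_nonneg (ha.le.trans hl) _)]
    exact hg_le l hl
  have hlim : Tendsto (fun l => g l • u l) atTop (𝓝 0) :=
    tendsto_smul_atTop_zero_of_isBigO_rpow hr hg_isBigO
      (isBigO_atTop_id_of_norm_deriv_le hu hu'_le)
  calc ‖∫ l in Ioi a, g' l • u l‖ = ‖-(g a • u a) - ∫ l in Ioi a, g l • u' l‖ := by
        rw [integral_Ioi_deriv_smul_eq hg hu hg'u hgu' hlim]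
    _ ≤ ‖u a‖ * |g a| + ‖∫ l in Ioi a, g l • u' l‖ := by
        refine (norm_sub_le _ _).trans_eq ?_
        rw [norm_neg, norm_smul, Real.norm_eq_abs, mul_comm]
    _ ≤ ‖u a‖ * |g a| + C * B / (r - 1) * a ^ (1 - r) := by
        gcongr
        exact norm_integral_Ioi_le_of_norm_le_rpow ha hr hgu'_le

end IntegrationByParts

section Kernel

variable {β : ℝ → ℝ} {b c l α p C : ℝ}

theorem hasDerivAt_comp_mul_left_mul_rpow_neg (hl : l ≠ 0) (hβ : HasDerivAt β b (c * l)) :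
    HasDerivAt (fun t => β (c * t) * t ^ (-α))
      (-((α * β (c * l) - b * c * l) * l ^ (-α - 1))) l := by
  have hcomp : HasDerivAt (fun t => β (c * t)) (b * c) l :=
    hβ.comp l (hasDerivAt_const_mul c)
  refine (hcomp.mul (Real.hasDerivAt_rpow_const (p := -α) (Or.inl hl))).congr_deriv ?_
  have hpow : l ^ (-α) = l ^ (-α - 1) * l := by
    rw [← Real.rpow_add_one hl, sub_add_cancel]
  rw [hpow]
  ring

theorem abs_comp_mul_left_mul_rpow_neg_le (hc : 0 ≤ c) (hl : 0 < l)
    (hβ : |β (c * l)| ≤ C * (c * l) ^ (-p)) :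
    |β (c * l) * l ^ (-α)| ≤ C * c ^ (-p) * l ^ (-(α + p)) :=
  calc |β (c * l) * l ^ (-α)| = |β (c * l)| * l ^ (-α) := by
        rw [abs_mul, abs_of_nonneg (Real.rpow_nonneg hl.le _)]
    _ ≤ C * (c * l) ^ (-p) * l ^ (-α) := by gcongr
    _ = C * c ^ (-p) * l ^ (-(α + p)) := by
        rw [Real.mul_rpow hc hl.le, neg_add, Real.rpow_add hl]
        ring

end Kernel

theorem stmt_12_general {E : Type*} [NormedAddCommGroup E] [NormedSpace ℝ E] [CompleteSpace E]
    {α q₀ C s B x : ℝ} (hα : 0 < α) (hq₀ : (1 - α) / α < q₀) (hs : s ∈ Ioc 0 1)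
    {φ : ℝ → E} (hφ : Differentiable ℝ φ) (hφ' : ∀ y, ‖deriv φ y‖ ≤ B)
    {β β' : ℝ → ℝ} (hβ : ∀ y, 1 ≤ y → HasDerivAt β (β' y) y)
    (hβ_le : ∀ y, 1 ≤ y → |β y| ≤ C * y ^ (-(α * q₀)))
    (hint : IntegrableOn
      (fun l =>
        ((α * β (s ^ (-(1 / α)) * l) - β' (s ^ (-(1 / α)) * l) * s ^ (-(1 / α)) * l) *
          l ^ (-α - 1)) • (φ (x + l) - φ x)) (Ioi 1)) :
    ‖∫ l in Ioi (1 : ℝ),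
        ((α * β (s ^ (-(1 / α)) * l) - β' (s ^ (-(1 / α)) * l) * s ^ (-(1 / α)) * l) *
          l ^ (-α - 1)) • (φ (x + l) - φ x)‖ ≤
      ‖φ (x + 1) - φ x‖ * |β (s ^ (-(1 / α)))| + C / (α * (1 + q₀) - 1) * B * s ^ q₀ := by
  have hr : 1 < α + α * q₀ := by linarith [(div_lt_iff₀' hα).1 hq₀]
  have hcs : (s ^ (-(1 / α))) ^ (-(α * q₀)) = s ^ q₀ := by
    rw [← Real.rpow_mul hs.1.le]
    congr 1
    field_simp
  have hc : 1 ≤ s ^ (-(1 / α)) := Real.one_le_rpow_of_pos_of_le_one_of_nonpos hs.1 hs.2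
    (neg_nonpos.2 (one_div_nonneg.2 hα.le))
  generalize s ^ (-(1 / α)) = c at *
  have hcl {l : ℝ} (hl : l ∈ Ici 1) : 1 ≤ c * l := one_le_mul_of_one_le_of_one_le hc hl
  have hpos {l : ℝ} (hl : l ∈ Ici 1) : 0 < l := one_pos.trans_le hl
  have key := norm_integral_Ioi_deriv_smul_le (u := fun l => φ (x + l) - φ x) one_pos hr
    (fun l hl => hasDerivAt_comp_mul_left_mul_rpow_neg (hpos hl).ne' (hβ _ (hcl hl)))
    (fun l _ => ((hφ (x + l)).hasDerivAt.comp_const_add x l).sub_const (φ x))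
    (fun l hl => abs_comp_mul_left_mul_rpow_neg_le (one_pos.le.trans hc) (hpos hl)
      (hβ_le _ (hcl hl)))
    (fun l _ => hφ' (x + l)) (by simpa only [neg_smul] using hint.fun_neg)
  simp only [neg_smul, integral_neg, norm_neg, mul_one, Real.one_rpow, hcs] at key
  refine key.trans_eq ?_
  ring

/-- Estimate of the tail integral `J₁` in the case `α ∈ (0,1)`, when
`q₀ > (1-α)/α`. -/
theorem stmt_12 (α q₀ Cβ s : ℝ) (hα : α ∈ Set.Ioo (0:ℝ) 1)
    (hq₀ : (1 - α) / α < q₀) (hCβ : 0 < Cβ) (hs : s ∈ Set.Ioc (0:ℝ) 1)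
    (φ : ℝ → ℝ) (hφ : ContDiff ℝ 1 φ)
    (hφb : ∃ M, ∀ x, |φ x| ≤ M) (hφ'b : ∃ M, ∀ x, |deriv φ x| ≤ M)
    (β β' : ℝ → ℝ)
    (hβd : ∀ y > (0:ℝ), HasDerivAt β (β' y) y)
    (hβ'c : ContinuousOn β' (Set.Ioi 0))
    (hβb : ∀ y : ℝ, 1 ≤ y → |β y| ≤ Cβ * y ^ (-(α * q₀)))
    (hint : ∀ x : ℝ, IntegrableOn
      (fun l => (φ (x + l) - φ x) *
        (α * β (s ^ (-(1/α)) * l) - β' (s ^ (-(1/α)) * l) * s ^ (-(1/α)) * l) *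
        l ^ (-α - 1)) (Set.Ioi 1)) :
    ∀ x : ℝ,
      |∫ l in Set.Ioi (1:ℝ),
          (φ (x + l) - φ x) *
            (α * β (s ^ (-(1/α)) * l) - β' (s ^ (-(1/α)) * l) * s ^ (-(1/α)) * l) *
            l ^ (-α - 1)| ≤
        2 * (⨆ y, |φ y|) * |β (s ^ (-(1/α)))| +
          Cβ / (α * (1 + q₀) - 1) * (⨆ y, |deriv φ y|) * s ^ q₀ := by
  have hφ_le := le_ciSup (f := fun y => |φ y|) (hφb.imp fun _ => forall_mem_range.2)
  have hφ'_le := le_ciSup (f := fun y => |deriv φ y|) (hφ'b.imp fun _ => forall_mem_range.2)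
  simp only [mul_comm (φ _ - φ _), mul_right_comm _ (φ _ - φ _)] at hint ⊢
  refine fun x => (stmt_12_general hα.1 hq₀ hs (hφ.differentiable one_ne_zero) hφ'_le
    (fun y hy => hβd y (one_pos.trans_le hy)) hβb (hint x)).trans ?_
  gcongr
  exact BoundedContinuousFunction.dist_le_two_norm' (f := φ) hφ_le (x + 1) x
end

section
/- Let α ∈ (0,1) and s ∈ (0,1]. Let φ : ℝ → ℝ be continuously differentiable with bounded derivative, and let β : (0,∞) → ℝ be continuously differentiable with ∫_0^1 |β(s^{−1/α} λ)| λ^{−α} dλ < ∞. Then for every x ∈ ℝ, | ∫_{s^{1/α}}^1 (φ(x+λ) − φ(x)) (α β(s^{−1/α} λ) − β′(s^{−1/α} λ) s^{−1/α} λ) λ^{−α−1} dλ | ≤ ‖φ′‖_∞ ( |β(1)| s^{(1−α)/α} + |β(s^{−1/α})| + ∫_0^1 |β(s^{−1/α} λ)| λ^{−α} dλ ). -/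
open MeasureTheory Set Filter

/-!
The weight is an exact derivative: with `f t = β (c t)` and `c = s ^ (-1/α)`,
`(α f(t) - t f'(t)) t ^ (-α-1) = d/dt (-f(t) t ^ (-α))`. Integrating by parts moves this derivative
onto the increment `u t = φ (x + t) - φ x`. If `φ` is `K`-Lipschitz, then `|u t| ≤ K t` and
`|u'| ≤ K` almost everywhere. The boundary terms at `t = s ^ (1/α)`, where `c t = 1`, and at `t = 1`
give the first two summands of the bound, and the remaining integral gives the third.
-/

open scoped NNReal

theorem lipschitzWith_iSup_nnnorm_deriv {𝕜 G : Type*} [RCLike 𝕜] [NormedAddCommGroup G]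
    [NormedSpace 𝕜 G] {f : 𝕜 → G} (hf : Differentiable 𝕜 f)
    (hbdd : BddAbove (range fun y => ‖deriv f y‖₊)) :
    LipschitzWith (⨆ y, ‖deriv f y‖₊) f :=
  lipschitzWith_of_nnnorm_deriv_le hf (le_ciSup hbdd)

theorem absolutelyContinuousOnInterval_congr {X : Type*} [PseudoMetricSpace X] {f g : ℝ → X}
    {a b : ℝ} (hf : AbsolutelyContinuousOnInterval f a b) (hfg : EqOn f g (uIcc a b)) :
    AbsolutelyContinuousOnInterval g a b := by
  refine Tendsto.congr' ?_ hf
  filter_upwards [mem_inf_of_right (mem_principal_self _)] with E hE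
  refine Finset.sum_congr rfl fun i hi => ?_
  rw [hfg (hE.1 i hi).1, hfg (hE.1 i hi).2]

theorem absolutelyContinuousOnInterval_of_hasDerivAt {f f' : ℝ → ℝ} {a b : ℝ}
    (hf : ∀ t ∈ uIcc a b, HasDerivAt f (f' t) t) (hf' : IntervalIntegrable f' volume a b) :
    AbsolutelyContinuousOnInterval f a b := by
  have hprimitive : AbsolutelyContinuousOnInterval (fun t => ∫ r in a..t, f' r) a b :=
    hf'.absolutelyContinuousOnInterval_intervalIntegral left_mem_uIcc
  have hconst : AbsolutelyContinuousOnInterval (fun _ => f a) a b :=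
    (LipschitzWith.const (f a)).lipschitzOnWith.absolutelyContinuousOnInterval
  refine absolutelyContinuousOnInterval_congr (hprimitive.fun_add hconst) fun t ht => ?_
  have hsub : uIcc a t ⊆ uIcc a b := uIcc_subset_uIcc_left ht
  rw [intervalIntegral.integral_eq_sub_of_hasDerivAt (fun r hr => hf r (hsub hr))
    (hf'.mono_set hsub), sub_add_cancel]

section LipschitzIntegrationByParts

variable {K : ℝ≥0} {a b : ℝ} {v : ℝ → ℝ}

theorem abs_integral_deriv_mul_le_of_lipschitzOnWith {u : ℝ → ℝ} (hab : a ≤ b)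
    (hu : LipschitzOnWith K u (Icc a b)) (hv : IntervalIntegrable v volume a b) :
    |∫ t in a..b, deriv u t * v t| ≤ K * ∫ t in a..b, |v t| := by
  rw [← intervalIntegral.integral_const_mul, ← Real.norm_eq_abs]
  refine intervalIntegral.norm_integral_le_of_norm_le hab ?_ (hv.abs.const_mul _)
  filter_upwards [Measure.ae_ne volume b] with t htb ht
  have hderiv : ‖deriv u t‖ ≤ K :=
    norm_deriv_le_of_lipschitzOn (Icc_mem_nhds ht.1 (ht.2.lt_of_ne htb)) hu
  rw [norm_mul, Real.norm_eq_abs (v t)]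
  gcongr

theorem abs_integral_mul_deriv_le_of_lipschitzOnWith {u : ℝ → ℝ} (hab : a ≤ b)
    (hu : LipschitzOnWith K u (Icc a b)) (hv : AbsolutelyContinuousOnInterval v a b) :
    |∫ t in a..b, u t * deriv v t| ≤
      |u b| * |v b| + |u a| * |v a| + K * ∫ t in a..b, |v t| := by
  have huAC : AbsolutelyContinuousOnInterval u a b :=
    LipschitzOnWith.absolutelyContinuousOnInterval (by rwa [uIcc_of_le hab])
  calc |∫ t in a..b, u t * deriv v t|
      = |u b * v b - u a * v a - ∫ t in a..b, deriv u t * v t| := by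
        rw [huAC.integral_mul_deriv_eq_deriv_mul hv]
    _ ≤ |u b * v b| + |u a * v a| + |∫ t in a..b, deriv u t * v t| :=
        (abs_sub _ _).trans (add_le_add_left (abs_sub _ _) _)
    _ ≤ |u b| * |v b| + |u a| * |v a| + K * ∫ t in a..b, |v t| := by
        rw [abs_mul, abs_mul]
        gcongr
        exact abs_integral_deriv_mul_le_of_lipschitzOnWith hab hu hv.continuousOn.intervalIntegrable

theorem abs_integral_increment_mul_deriv_le {φ : ℝ → ℝ} (hφ : LipschitzWith K φ) (x : ℝ)
    (ha : 0 ≤ a) (hab : a ≤ b) (hv : AbsolutelyContinuousOnInterval v a b) :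
    |∫ t in a..b, (φ (x + t) - φ x) * deriv v t| ≤
      K * (a * |v a| + b * |v b| + ∫ t in a..b, |v t|) := by
  have hlip : LipschitzWith K fun t => φ (x + t) - φ x :=
    LipschitzWith.of_dist_le_mul fun t r => by
      simpa using hφ.dist_le_mul (x + t) (x + r)
  have hincr : ∀ t, 0 ≤ t → |φ (x + t) - φ x| ≤ K * t := fun t ht => by
    simpa [Real.dist_eq, abs_of_nonneg ht] using hφ.dist_le_mul (x + t) x
  calc |∫ t in a..b, (φ (x + t) - φ x) * deriv v t|
      ≤ |φ (x + b) - φ x| * |v b| + |φ (x + a) - φ x| * |v a| + K * ∫ t in a..b, |v t| :=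
        abs_integral_mul_deriv_le_of_lipschitzOnWith hab hlip.lipschitzOnWith hv
    _ ≤ K * b * |v b| + K * a * |v a| + K * ∫ t in a..b, |v t| := by
        gcongr
        exacts [hincr b (ha.trans hab), hincr a ha]
    _ = K * (a * |v a| + b * |v b| + ∫ t in a..b, |v t|) := by ring

end LipschitzIntegrationByParts

section PowerWeight

variable {f f' : ℝ → ℝ} {a b : ℝ}

theorem hasDerivAt_neg_mul_rpow_neg {t m : ℝ} (α : ℝ) (ht : 0 < t) (hf : HasDerivAt f m t) :
    HasDerivAt (fun r => -(f r * r ^ (-α))) ((α * f t - m * t) * t ^ (-α - 1)) t := by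
  have hpow : HasDerivAt (fun r : ℝ => r ^ (-α)) (-α * t ^ (-α - 1)) t :=
    Real.hasDerivAt_rpow_const (Or.inl ht.ne')
  have hsplit : t ^ (-α) = t ^ (-α - 1) * t := by
    rw [← Real.rpow_add_one ht.ne', sub_add_cancel]
  refine (hf.mul hpow).neg.congr_deriv ?_
  rw [hsplit]
  ring

theorem intervalIntegrable_deriv_neg_mul_rpow_neg (α : ℝ) (hpos : ∀ t ∈ uIcc a b, 0 < t)
    (hf : ContinuousOn f (uIcc a b)) (hf' : IntervalIntegrable f' volume a b) :
    IntervalIntegrable (fun t => (α * f t - f' t * t) * t ^ (-α - 1)) volume a b := by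
  have hpow : ContinuousOn (fun t : ℝ => t ^ (-α - 1)) (uIcc a b) :=
    continuousOn_id.rpow_const fun t ht => Or.inl (hpos t ht).ne'
  exact ((hf.intervalIntegrable.const_mul α).sub
    (hf'.mul_continuousOn continuousOn_id)).mul_continuousOn hpow

theorem mul_abs_neg_mul_rpow_neg {t : ℝ} (α y : ℝ) (ht : 0 < t) :
    t * |-(y * t ^ (-α))| = |y| * t ^ (1 - α) := by
  rw [abs_neg, abs_mul, abs_of_pos (Real.rpow_pos_of_pos ht _), sub_eq_add_neg,
    Real.rpow_add ht, Real.rpow_one]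
  ring

theorem abs_integral_increment_mul_power_weight_le {φ : ℝ → ℝ} {K : ℝ≥0}
    (hφ : LipschitzWith K φ) (x α : ℝ) (ha : 0 < a) (hab : a ≤ b)
    (hf : ∀ t ∈ Icc a b, HasDerivAt f (f' t) t) (hf' : IntervalIntegrable f' volume a b) :
    |∫ t in a..b, (φ (x + t) - φ x) * ((α * f t - f' t * t) * t ^ (-α - 1))| ≤
      K * (|f a| * a ^ (1 - α) + |f b| * b ^ (1 - α) + ∫ t in a..b, |f t| * t ^ (-α)) := by
  rw [← uIcc_of_le hab] at hf
  have hpos : ∀ t ∈ uIcc a b, 0 < t := fun t ht => by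
    rw [uIcc_of_le hab] at ht
    exact ha.trans_le ht.1
  have hderiv : ∀ t ∈ uIcc a b, HasDerivAt (fun r => -(f r * r ^ (-α)))
      ((α * f t - f' t * t) * t ^ (-α - 1)) t := fun t ht =>
    hasDerivAt_neg_mul_rpow_neg α (hpos t ht) (hf t ht)
  have hAC : AbsolutelyContinuousOnInterval (fun r => -(f r * r ^ (-α))) a b :=
    absolutelyContinuousOnInterval_of_hasDerivAt hderiv
      (intervalIntegrable_deriv_neg_mul_rpow_neg α hpos (HasDerivAt.continuousOn hf) hf')
  have hweight : ∫ t in a..b, (φ (x + t) - φ x) * ((α * f t - f' t * t) * t ^ (-α - 1)) =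
      ∫ t in a..b, (φ (x + t) - φ x) * deriv (fun r => -(f r * r ^ (-α))) t :=
    intervalIntegral.integral_congr fun t ht => by simp only [(hderiv t ht).deriv]
  have habs : ∫ t in a..b, |-(f t * t ^ (-α))| = ∫ t in a..b, |f t| * t ^ (-α) :=
    intervalIntegral.integral_congr fun t ht => by
      simp only [abs_neg, abs_mul, abs_of_pos (Real.rpow_pos_of_pos (hpos t ht) _)]
  rw [hweight, ← habs, ← mul_abs_neg_mul_rpow_neg α (f a) ha,
    ← mul_abs_neg_mul_rpow_neg α (f b) (ha.trans_le hab)]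
  exact abs_integral_increment_mul_deriv_le hφ x ha.le hab hAC

theorem abs_integral_increment_mul_rescaled_weight_le {φ : ℝ → ℝ} {K : ℝ≥0}
    (hφ : LipschitzWith K φ) (x α : ℝ) {β β' : ℝ → ℝ} {c : ℝ} (hc : 0 < c)
    (ha : 0 < a) (hab : a ≤ b) (hβ : ∀ y > (0 : ℝ), HasDerivAt β (β' y) y)
    (hβ' : LocallyIntegrableOn β' (Ioi 0)) :
    |∫ t in a..b, (φ (x + t) - φ x) *
        ((α * β (c * t) - β' (c * t) * c * t) * t ^ (-α - 1))| ≤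
      K * (|β (c * a)| * a ^ (1 - α) + |β (c * b)| * b ^ (1 - α) +
        ∫ t in a..b, |β (c * t)| * t ^ (-α)) := by
  have hderiv : ∀ t ∈ Icc a b, HasDerivAt (fun r => β (c * r)) (β' (c * t) * c) t := fun t ht =>
    (hβ (c * t) (mul_pos hc (ha.trans_le ht.1))).comp t (hasDerivAt_const_mul c)
  have hβ'int : IntervalIntegrable β' volume (c * a) (c * b) := by
    have hcab : c * a ≤ c * b := by gcongr
    refine IntegrableOn.intervalIntegrable (hβ'.integrableOn_compact_subset ?_ isCompact_uIcc)
    rw [uIcc_of_le hcab]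
    exact Icc_subset_Ioi_iff hcab |>.2 (mul_pos hc ha)
  have hderiv_int : IntervalIntegrable (fun t => β' (c * t) * c) volume a b := by
    simpa only [mul_div_cancel_left₀ _ hc.ne'] using (hβ'int.comp_mul_left (c := c)).mul_const c
  exact abs_integral_increment_mul_power_weight_le hφ x α ha hab hderiv hderiv_int

end PowerWeight

theorem stmt_14_general {α s : ℝ} (hα : 0 < α) (hs : s ∈ Ioc (0 : ℝ) 1)
    {φ : ℝ → ℝ} {K : ℝ≥0} (hφ : LipschitzWith K φ) {β β' : ℝ → ℝ}
    (hβ : ∀ y > (0 : ℝ), HasDerivAt β (β' y) y) (hβ' : LocallyIntegrableOn β' (Ioi 0))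
    (hint : IntegrableOn (fun l => |β (s ^ (-(1 / α)) * l)| * l ^ (-α)) (Ioc 0 1)) (x : ℝ) :
    |∫ l in Ioc (s ^ (1 / α)) (1 : ℝ),
        (φ (x + l) - φ x) *
          (α * β (s ^ (-(1 / α)) * l) - β' (s ^ (-(1 / α)) * l) * s ^ (-(1 / α)) * l) *
          l ^ (-α - 1)| ≤
      K * (|β 1| * s ^ ((1 - α) / α) + |β (s ^ (-(1 / α)))| +
        ∫ l in Ioc (0 : ℝ) 1, |β (s ^ (-(1 / α)) * l)| * l ^ (-α)) := by
  have ha : 0 < s ^ (1 / α) := Real.rpow_pos_of_pos hs.1 _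
  have ha1 : s ^ (1 / α) ≤ 1 := Real.rpow_le_one hs.1.le hs.2 (one_div_nonneg.2 hα.le)
  have hc : 0 < s ^ (-(1 / α)) := Real.rpow_pos_of_pos hs.1 _
  have hca : s ^ (-(1 / α)) * s ^ (1 / α) = 1 := by
    rw [← Real.rpow_add hs.1, neg_add_cancel, Real.rpow_zero]
  have hpow : (s ^ (1 / α)) ^ (1 - α) = s ^ ((1 - α) / α) := by
    rw [← Real.rpow_mul hs.1.le, one_div_mul_eq_div]
  have hmono : ∫ l in Ioc (s ^ (1 / α)) 1, |β (s ^ (-(1 / α)) * l)| * l ^ (-α) ≤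
      ∫ l in Ioc (0 : ℝ) 1, |β (s ^ (-(1 / α)) * l)| * l ^ (-α) :=
    setIntegral_mono_set hint
      (ae_restrict_of_forall_mem measurableSet_Ioc fun l hl =>
        mul_nonneg (abs_nonneg _) (Real.rpow_nonneg hl.1.le _))
      (Ioc_subset_Ioc_left ha.le).eventuallyLE
  have hbound := abs_integral_increment_mul_rescaled_weight_le hφ x α hc ha ha1 hβ hβ'
  simp only [intervalIntegral.integral_of_le ha1, hca, hpow, mul_one, Real.one_rpow,
    ← mul_assoc] at hbound
  exact hbound.trans (by gcongr)

/-- Estimate of the middle integral `J₂` in the case `α ∈ (0,1)`. -/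
theorem stmt_14 (α s : ℝ) (hα : α ∈ Set.Ioo (0:ℝ) 1) (hs : s ∈ Set.Ioc (0:ℝ) 1)
    (φ : ℝ → ℝ) (hφ : ContDiff ℝ 1 φ)
    (hφ'b : ∃ M, ∀ x, |deriv φ x| ≤ M)
    (β β' : ℝ → ℝ)
    (hβd : ∀ y > (0:ℝ), HasDerivAt β (β' y) y)
    (hβ'c : ContinuousOn β' (Set.Ioi 0))
    (hint : IntegrableOn (fun l => |β (s ^ (-(1/α)) * l)| * l ^ (-α)) (Set.Ioc 0 1)) :
    ∀ x : ℝ,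
      |∫ l in Set.Ioc (s ^ (1/α)) (1:ℝ),
          (φ (x + l) - φ x) *
            (α * β (s ^ (-(1/α)) * l) - β' (s ^ (-(1/α)) * l) * s ^ (-(1/α)) * l) *
            l ^ (-α - 1)| ≤
        (⨆ y, |deriv φ y|) *
          (|β 1| * s ^ ((1 - α) / α) + |β (s ^ (-(1/α)))| +
            ∫ l in Set.Ioc (0:ℝ) 1, |β (s ^ (-(1/α)) * l)| * l ^ (-α)) := by
  obtain ⟨M, hM⟩ := hφ'b
  have hbdd : BddAbove (range fun y => ‖deriv φ y‖₊) :=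
    ⟨M.toNNReal, forall_mem_range.2 fun y => NNReal.le_toNNReal_of_coe_le (hM y)⟩
  simpa [NNReal.coe_iSup] using stmt_14_general hα.1 hs
    (lipschitzWith_iSup_nnnorm_deriv (hφ.differentiable one_ne_zero) hbdd) hβd
    (hβ'c.locallyIntegrableOn measurableSet_Ioi) hint
end

section
/- Let α ∈ (0,1) and s ∈ (0,1]. Let φ : ℝ → ℝ be continuously differentiable with bounded derivative, and let β : (0,1] → ℝ be continuously differentiable with ∫_0^1 |α β(λ) − β′(λ) λ| λ^{−α} dλ < ∞. Then for every x ∈ ℝ, ∫_0^{s^{1/α}} |φ(x+λ) − φ(x)| · |α β(s^{−1/α} λ) − β′(s^{−1/α} λ) s^{−1/α} λ| λ^{−α−1} dλ ≤ ‖φ′‖_∞ s^{(1−α)/α} ∫_0^1 |α β(λ) − β′(λ) λ| λ^{−α} dλ. -/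
open MeasureTheory Set Filter

/-!
The mean value theorem gives `‖φ (x + l) - φ x‖ ≤ ‖φ'‖_∞ * l`, which cancels one power of the
singularity `l ^ (-α - 1)`. With `a = s ^ (1 / α)`, rescaling `(0, a]` to `(0, 1]` then yields the
constant: the weight `l ^ (-α)` contributes `a ^ (-α)`, the measure contributes `a`, and
`a ^ (1 - α) = s ^ ((1 - α) / α)`.
-/

section MeanValue

variable {𝕜 E : Type*} [RCLike 𝕜] [NormedAddCommGroup E] [NormedSpace 𝕜 E]

lemma norm_sub_le_iSup_norm_deriv_mul {φ : 𝕜 → E} (hφ : Differentiable 𝕜 φ)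
    (hbdd : BddAbove (range fun z => ‖deriv φ z‖)) (x y : 𝕜) :
    ‖φ y - φ x‖ ≤ (⨆ z, ‖deriv φ z‖) * ‖y - x‖ :=
  convex_univ.norm_image_sub_le_of_norm_deriv_le (fun z _ => hφ z) (fun z _ => le_ciSup hbdd z)
    (mem_univ x) (mem_univ y)

end MeanValue

section Rescaling

variable {E : Type*} [NormedAddCommGroup E] {a : ℝ}

lemma setIntegral_Ioc_comp_inv_mul [NormedSpace ℝ E] (ha : 0 < a) (f : ℝ → E) (b c : ℝ) :
    ∫ x in Ioc (a * b) (a * c), f (a⁻¹ * x) = a • ∫ x in Ioc b c, f x := by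
  have h := Measure.setIntegral_comp_smul_of_pos volume f (Ioc (a * b) (a * c)) (inv_pos.2 ha)
  simpa [LinearOrderedField.smul_Ioc (inv_pos.2 ha), ha.ne'] using h

lemma integrableOn_Ioc_comp_inv_mul (ha : 0 < a) {f : ℝ → E} {b c : ℝ} (hbc : b ≤ c)
    (hf : IntegrableOn f (Ioc b c)) :
    IntegrableOn (fun x => f (a⁻¹ * x)) (Ioc (a * b) (a * c)) := by
  rw [← intervalIntegrable_iff_integrableOn_Ioc_of_le (by gcongr)]
  rw [← intervalIntegrable_iff_integrableOn_Ioc_of_le hbc] at hf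
  simpa [mul_comm] using hf.comp_mul_left (c := a⁻¹)

end Rescaling

lemma mul_rpow_neg_sub_one_eq_rescale {a l : ℝ} (ha : 0 < a) (hl : 0 < l) (α : ℝ) :
    l * l ^ (-α - 1) = a ^ (-α) * (a⁻¹ * l) ^ (-α) := by
  rw [← Real.mul_rpow ha.le (by positivity), mul_inv_cancel_left₀ ha.ne',
    Real.rpow_sub_one hl.ne', mul_div_cancel₀ _ hl.ne']

section SingularIntegral

variable {E F : Type*} [NormedAddCommGroup E] [NormedAddCommGroup F]

lemma setIntegral_norm_mul_rescale_mul_rpow_le {f : ℝ → E} {g : ℝ → F} {a K α : ℝ} (ha : 0 < a)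
    (hf : ∀ l ∈ Ioc 0 a, ‖f l‖ ≤ K * l)
    (hg : IntegrableOn (fun l => ‖g l‖ * l ^ (-α)) (Ioc 0 1)) :
    ∫ l in Ioc 0 a, ‖f l‖ * ‖g (a⁻¹ * l)‖ * l ^ (-α - 1) ≤
      K * a ^ (1 - α) * ∫ l in Ioc 0 1, ‖g l‖ * l ^ (-α) := by
  set w : ℝ → ℝ := fun l => ‖g l‖ * l ^ (-α)
  have hw_int : IntegrableOn (fun l => w (a⁻¹ * l)) (Ioc 0 a) := by
    simpa using integrableOn_Ioc_comp_inv_mul ha zero_le_one hg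
  have hw_rescale : ∫ l in Ioc 0 a, w (a⁻¹ * l) = a * ∫ l in Ioc 0 1, w l := by
    simpa using setIntegral_Ioc_comp_inv_mul ha w 0 1
  have integrand_nonneg : ∀ l ∈ Ioc 0 a, 0 ≤ ‖f l‖ * ‖g (a⁻¹ * l)‖ * l ^ (-α - 1) :=
    fun l hl => mul_nonneg (by positivity) (Real.rpow_nonneg hl.1.le _)
  have integrand_le : ∀ l ∈ Ioc 0 a,
      ‖f l‖ * ‖g (a⁻¹ * l)‖ * l ^ (-α - 1) ≤ K * a ^ (-α) * w (a⁻¹ * l) := by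
    intro l hl
    have hl₀ : 0 < l := hl.1
    calc ‖f l‖ * ‖g (a⁻¹ * l)‖ * l ^ (-α - 1)
        ≤ K * l * ‖g (a⁻¹ * l)‖ * l ^ (-α - 1) := by gcongr; exact hf l hl
      _ = K * ‖g (a⁻¹ * l)‖ * (l * l ^ (-α - 1)) := by ring
      _ = K * a ^ (-α) * w (a⁻¹ * l) := by
        rw [mul_rpow_neg_sub_one_eq_rescale ha hl₀]
        ring
  calc ∫ l in Ioc 0 a, ‖f l‖ * ‖g (a⁻¹ * l)‖ * l ^ (-α - 1)
      ≤ ∫ l in Ioc 0 a, K * a ^ (-α) * w (a⁻¹ * l) :=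
        integral_mono_of_nonneg (ae_restrict_of_forall_mem measurableSet_Ioc integrand_nonneg)
          (hw_int.const_mul _) (ae_restrict_of_forall_mem measurableSet_Ioc integrand_le)
    _ = K * (a ^ (-α) * a) * ∫ l in Ioc 0 1, w l := by
        rw [integral_const_mul, hw_rescale]
        ring
    _ = K * a ^ (1 - α) * ∫ l in Ioc 0 1, w l := by
        rw [← Real.rpow_add_one ha.ne', neg_add_eq_sub]

theorem stmt_15_general [NormedSpace ℝ E] {φ : ℝ → E} (hφ : Differentiable ℝ φ)
    (hφ' : BddAbove (range fun y => ‖deriv φ y‖)) {g : ℝ → F} {a α : ℝ} (ha : 0 < a)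
    (hg : IntegrableOn (fun l => ‖g l‖ * l ^ (-α)) (Ioc 0 1)) (x : ℝ) :
    ∫ l in Ioc 0 a, ‖φ (x + l) - φ x‖ * ‖g (a⁻¹ * l)‖ * l ^ (-α - 1) ≤
      (⨆ y, ‖deriv φ y‖) * a ^ (1 - α) * ∫ l in Ioc 0 1, ‖g l‖ * l ^ (-α) := by
  refine setIntegral_norm_mul_rescale_mul_rpow_le ha (fun l hl => ?_) hg
  simpa [abs_of_pos hl.1] using norm_sub_le_iSup_norm_deriv_mul hφ hφ' x (x + l)

end SingularIntegral

/-- Estimate of the singular integral `J₃` near the origin in the case `α ∈ (0,1)`. -/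
theorem stmt_15 (α s : ℝ) (hα : α ∈ Set.Ioo (0:ℝ) 1) (hs : s ∈ Set.Ioc (0:ℝ) 1)
    (φ : ℝ → ℝ) (hφ : ContDiff ℝ 1 φ)
    (hφ'b : ∃ M, ∀ x, |deriv φ x| ≤ M)
    (β β' : ℝ → ℝ)
    (hβd : ∀ l ∈ Set.Ioc (0:ℝ) 1, HasDerivAt β (β' l) l)
    (hβ'c : ContinuousOn β' (Set.Ioc 0 1))
    (hint : IntegrableOn (fun l => |α * β l - β' l * l| * l ^ (-α)) (Set.Ioc 0 1)) :
    ∀ x : ℝ,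
      (∫ l in Set.Ioc (0:ℝ) (s ^ (1/α)),
          |φ (x + l) - φ x| *
            |α * β (s ^ (-(1/α)) * l) - β' (s ^ (-(1/α)) * l) * s ^ (-(1/α)) * l| *
            l ^ (-α - 1)) ≤
        (⨆ y, |deriv φ y|) * s ^ ((1 - α) / α) *
          ∫ l in Set.Ioc (0:ℝ) 1, |α * β l - β' l * l| * l ^ (-α) := by
  intro x
  have hφ'_bdd : BddAbove (range fun y => ‖deriv φ y‖) := hφ'b.imp fun _ => forall_mem_range.2
  have scale_rpow : s ^ ((1 - α) / α) = (s ^ (1 / α)) ^ (1 - α) := by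
    rw [← Real.rpow_mul hs.1.le, one_div_mul_eq_div]
  rw [Real.rpow_neg hs.1.le, scale_rpow]
  simpa only [Real.norm_eq_abs, mul_assoc] using
    stmt_15_general (g := fun l => α * β l - β' l * l) (hφ.differentiable one_ne_zero) hφ'_bdd
      (Real.rpow_pos_of_pos hs.1 (1 / α)) hint x
end

section
/- Let s ∈ (0,1]. Let φ : ℝ → ℝ be twice continuously differentiable with φ′ and φ″ bounded, and let β : (0,∞) → ℝ be continuously differentiable with ∫_0^1 |β(s^{−1} λ)| dλ < ∞. Then for every x ∈ ℝ, | ∫_s^1 (φ(x+λ) − φ(x) − φ′(x) λ) (β(s^{−1} λ) − β′(s^{−1} λ) s^{−1} λ) λ^{−2} dλ | ≤ ‖φ″‖_∞ ( |β(1)| s + |β(s^{−1})| ) + ‖φ″‖_∞ ∫_0^1 |β(s^{−1} λ)| dλ. -/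
open MeasureTheory Set Filter

/-!
Since `(β(l/s) - β'(l/s) l/s) / l²` is minus the derivative of `β(l/s) / l`, one integrates by parts
against the Taylor remainder `g(l) = φ(x + l) - φ(x) - φ'(x) l`. Because `|g(l)| ≤ ‖φ''‖ l² / 2`,
the boundary terms are at most `‖φ''‖ |β(l/s)| l / 2` at `l = s` and `l = 1`; because
`|g'(l)| ≤ ‖φ''‖ l`, the factor `1 / l` cancels in the remaining integral of `g'(l) β(l/s) / l`.
-/

open scoped NNReal

theorem hasDerivAt_div_id {𝕜 : Type*} [NontriviallyNormedField 𝕜] {B : 𝕜 → 𝕜} {B' l : 𝕜}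
    (hB : HasDerivAt B B' l) (hl : l ≠ 0) :
    HasDerivAt (fun t => B t / t) (-((B l - B' * l) * (l ^ 2)⁻¹)) l :=
  (hB.fun_div (hasDerivAt_id' l) hl).congr_deriv (by ring)

theorem lipschitzWith_iSup_norm_deriv {𝕜 E : Type*} [RCLike 𝕜] [NormedAddCommGroup E]
    [NormedSpace 𝕜 E] {f : 𝕜 → E} (hf : Differentiable 𝕜 f)
    (hbdd : BddAbove (range fun y => ‖deriv f y‖)) :
    LipschitzWith (⨆ y, ‖deriv f y‖).toNNReal f :=
  lipschitzWith_of_nnnorm_deriv_le hf fun y => NNReal.coe_le_coe.1 <|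
    (le_ciSup hbdd y).trans (Real.le_coe_toNNReal _)

section NormedSpace

variable {E : Type*} [NormedAddCommGroup E] [NormedSpace ℝ E]

theorem norm_le_half_mul_sq_of_norm_deriv_le {g g' : ℝ → E} {K b : ℝ} (hb : 0 ≤ b)
    (hg : ∀ l ∈ Icc 0 b, HasDerivAt g (g' l) l) (hg0 : g 0 = 0)
    (hg' : ∀ l ∈ Icc 0 b, ‖g' l‖ ≤ K * l) :
    ‖g b‖ ≤ K / 2 * b ^ 2 := by
  have hparabola (l : ℝ) : HasDerivAt (fun t => K / 2 * t ^ 2) (K * l) l :=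
    ((hasDerivAt_pow 2 l).const_mul (K / 2)).congr_deriv (by ring)
  exact image_norm_le_of_norm_deriv_right_le_deriv_boundary
    (fun l hl => (hg l hl).continuousAt.continuousWithinAt)
    (fun l hl => (hg l (Ico_subset_Icc_self hl)).hasDerivWithinAt)
    (by simp [hg0]) hparabola (fun l hl => hg' l (Ico_subset_Icc_self hl)) (right_mem_Icc.2 hb)

theorem hasDerivAt_sub_sub_smul {φ : ℝ → E} {φ' : E} {x l : ℝ} (hφ : HasDerivAt φ φ' (x + l))
    (v : E) : HasDerivAt (fun t => φ (x + t) - φ x - t • v) (φ' - v) l := by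
  have hlinear : HasDerivAt (fun t : ℝ => t • v) v l := by
    simpa using (hasDerivAt_id' l).smul_const v
  exact ((hφ.comp_const_add x l).sub_const (φ x)).sub hlinear

theorem norm_div_smul_le {l c C : ℝ} {v : E} (hl : 0 < l) (hv : ‖v‖ ≤ C * l) :
    ‖(c / l) • v‖ ≤ C * |c| := by
  rw [norm_smul, norm_div, Real.norm_eq_abs, Real.norm_of_nonneg hl.le]
  calc |c| / l * ‖v‖ ≤ |c| / l * (C * l) := by gcongr
    _ = C * |c| := by field_simp

section IntegrationByParts

variable {a b K : ℝ} {B B' : ℝ → ℝ} {g g' : ℝ → E}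

theorem integral_smul_eq_boundary_add_integral_div_smul_deriv [CompleteSpace E]
    (ha : 0 < a) (hab : a ≤ b)
    (hB : ∀ l ∈ Icc a b, HasDerivAt B (B' l) l) (hB' : ContinuousOn B' (Icc a b))
    (hg : ∀ l ∈ Icc a b, HasDerivAt g (g' l) l) (hg' : ContinuousOn g' (Icc a b)) :
    ∫ l in a..b, ((B l - B' l * l) * (l ^ 2)⁻¹) • g l =
      (B a / a) • g a - (B b / b) • g b + ∫ l in a..b, (B l / l) • g' l := by
  have hne : ∀ l ∈ Icc a b, l ≠ 0 := fun l hl => (ha.trans_le hl.1).ne'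
  have hBc : ContinuousOn B (Icc a b) := fun l hl => (hB l hl).continuousAt.continuousWithinAt
  have hderiv_cont : ContinuousOn (fun l => -((B l - B' l * l) * (l ^ 2)⁻¹)) (Icc a b) :=
    ((hBc.sub (hB'.mul continuousOn_id)).mul
      ((continuousOn_pow 2).inv₀ fun l hl => pow_ne_zero 2 (hne l hl))).neg
  rw [← uIcc_of_le hab] at hB hg hg' hne hderiv_cont
  have hparts := intervalIntegral.integral_smul_deriv_eq_deriv_smul
    (fun l hl => hasDerivAt_div_id (hB l hl) (hne l hl)) hg
    hderiv_cont.intervalIntegrable hg'.intervalIntegrable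
  simp only [neg_smul, intervalIntegral.integral_neg] at hparts
  rw [hparts]
  abel

theorem norm_integral_div_smul_le (ha : 0 < a) (hab : a ≤ b) (hB : ContinuousOn B (Icc a b))
    (hg' : ∀ l ∈ Icc a b, ‖g' l‖ ≤ K * l) :
    ‖∫ l in a..b, (B l / l) • g' l‖ ≤ K * ∫ l in a..b, |B l| := by
  rw [← intervalIntegral.integral_const_mul]
  refine intervalIntegral.norm_integral_le_of_norm_le hab (.of_forall fun l hl => ?_) ?_
  · exact norm_div_smul_le (ha.trans hl.1) (hg' l (Ioc_subset_Icc_self hl))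
  · exact (hB.abs.const_mul K).intervalIntegrable_of_Icc hab

theorem norm_integral_smul_le_of_norm_deriv_le [CompleteSpace E] (ha : 0 < a) (hab : a ≤ b)
    (hB : ∀ l ∈ Icc a b, HasDerivAt B (B' l) l) (hB' : ContinuousOn B' (Icc a b))
    (hg : ∀ l ∈ Icc 0 b, HasDerivAt g (g' l) l) (hg'c : ContinuousOn g' (Icc a b))
    (hg0 : g 0 = 0) (hg' : ∀ l ∈ Icc 0 b, ‖g' l‖ ≤ K * l) :
    ‖∫ l in a..b, ((B l - B' l * l) * (l ^ 2)⁻¹) • g l‖ ≤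
      K / 2 * (|B a| * a + |B b| * b) + K * ∫ l in a..b, |B l| := by
  have hsub : Icc a b ⊆ Icc 0 b := Icc_subset_Icc_left ha.le
  have hg_sq : ∀ l ∈ Icc a b, ‖g l‖ ≤ K / 2 * l ^ 2 := fun l hl =>
    have hsub_l : Icc 0 l ⊆ Icc 0 b := Icc_subset_Icc_right hl.2
    norm_le_half_mul_sq_of_norm_deriv_le (ha.le.trans hl.1) (fun t ht => hg t (hsub_l ht)) hg0
      (fun t ht => hg' t (hsub_l ht))
  have hboundary : ∀ l ∈ Icc a b, ‖(B l / l) • g l‖ ≤ K / 2 * l * |B l| := fun l hl =>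
    norm_div_smul_le (ha.trans_le hl.1) ((hg_sq l hl).trans_eq (by ring))
  have hintegral := norm_integral_div_smul_le ha hab
    (fun l hl => (hB l hl).continuousAt.continuousWithinAt) (fun l hl => hg' l (hsub hl))
  rw [integral_smul_eq_boundary_add_integral_div_smul_deriv ha hab hB hB'
    (fun l hl => hg l (hsub hl)) hg'c]
  calc ‖(B a / a) • g a - (B b / b) • g b + ∫ l in a..b, (B l / l) • g' l‖
      ≤ ‖(B a / a) • g a‖ + ‖(B b / b) • g b‖ + ‖∫ l in a..b, (B l / l) • g' l‖ :=
        (norm_add_le _ _).trans (by gcongr; exact norm_sub_le _ _)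
    _ ≤ K / 2 * a * |B a| + K / 2 * b * |B b| + K * ∫ l in a..b, |B l| :=
        add_le_add_three (hboundary a (left_mem_Icc.2 hab)) (hboundary b (right_mem_Icc.2 hab))
          hintegral
    _ = K / 2 * (|B a| * a + |B b| * b) + K * ∫ l in a..b, |B l| := by ring

end IntegrationByParts

theorem stmt_17_general [CompleteSpace E] {s : ℝ} (hs : s ∈ Ioc (0 : ℝ) 1) {φ φ' : ℝ → E} {K : ℝ≥0}
    (hφ : ∀ y, HasDerivAt φ (φ' y) y) (hφ' : LipschitzWith K φ') {β β' : ℝ → ℝ}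
    (hβ : ∀ y > (0 : ℝ), HasDerivAt β (β' y) y) (hβ' : ContinuousOn β' (Ioi 0)) (x : ℝ) :
    ‖∫ l in Ioc s 1, ((β (s⁻¹ * l) - β' (s⁻¹ * l) * s⁻¹ * l) * (l ^ 2)⁻¹) •
        (φ (x + l) - φ x - l • φ' x)‖ ≤
      K / 2 * (|β 1| * s + |β s⁻¹|) + K * ∫ l in Ioc s 1, |β (s⁻¹ * l)| := by
  obtain ⟨hs0, hs1⟩ := hs
  have hpos : ∀ l ∈ Icc s 1, 0 < s⁻¹ * l := fun l hl => mul_pos (inv_pos.2 hs0) (hs0.trans_le hl.1)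
  have hscaled : ∀ l ∈ Icc s 1, HasDerivAt (fun t => β (s⁻¹ * t)) (β' (s⁻¹ * l) * s⁻¹) l :=
    fun l hl => (hβ _ (hpos l hl)).comp l (hasDerivAt_const_mul s⁻¹)
  have hscaled' : ContinuousOn (fun l => β' (s⁻¹ * l) * s⁻¹) (Icc s 1) :=
    (hβ'.comp (continuousOn_id.const_mul s⁻¹) hpos).mul_const s⁻¹
  have hremainder' : Continuous fun l => φ' (x + l) - φ' x :=
    (hφ'.continuous.comp (continuous_const_add x)).sub continuous_const
  have hbound := norm_integral_smul_le_of_norm_deriv_le hs0 hs1 hscaled hscaled'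
    (fun l _ => hasDerivAt_sub_sub_smul (hφ (x + l)) (φ' x)) hremainder'.continuousOn (by simp)
    (fun l hl => by simpa [abs_of_nonneg hl.1] using hφ'.norm_sub_le (x + l) x)
  simpa [intervalIntegral.integral_of_le hs1, hs0.ne'] using hbound

end NormedSpace

/-- Estimate of the middle integral `T₂` in the case `α = 1`. -/
theorem stmt_17 (s : ℝ) (hs : s ∈ Set.Ioc (0:ℝ) 1)
    (φ : ℝ → ℝ) (hφ : ContDiff ℝ 2 φ)
    (hφ'b : ∃ M, ∀ x, |deriv φ x| ≤ M)
    (hφ''b : ∃ M, ∀ x, |deriv (deriv φ) x| ≤ M)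
    (β β' : ℝ → ℝ)
    (hβd : ∀ y > (0:ℝ), HasDerivAt β (β' y) y)
    (hβ'c : ContinuousOn β' (Set.Ioi 0))
    (hint : IntegrableOn (fun l => |β (s⁻¹ * l)|) (Set.Ioc 0 1)) :
    ∀ x : ℝ,
      |∫ l in Set.Ioc s (1:ℝ),
          (φ (x + l) - φ x - deriv φ x * l) *
            (β (s⁻¹ * l) - β' (s⁻¹ * l) * s⁻¹ * l) * (l ^ 2)⁻¹| ≤
        (⨆ y, |deriv (deriv φ) y|) * (|β 1| * s + |β s⁻¹|) +
          (⨆ y, |deriv (deriv φ) y|) * ∫ l in Set.Ioc (0:ℝ) 1, |β (s⁻¹ * l)| := by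
  intro x
  have hsup : 0 ≤ ⨆ y, |deriv (deriv φ) y| := Real.iSup_nonneg fun y => abs_nonneg _
  have hlip := lipschitzWith_iSup_norm_deriv hφ.differentiable_deriv_two
    (hφ''b.imp fun _ => forall_mem_range.2)
  have hbound := stmt_17_general hs (fun y => (hφ.differentiable two_ne_zero y).hasDerivAt) hlip
    hβd hβ'c x
  have hmono : ∫ l in Ioc s 1, |β (s⁻¹ * l)| ≤ ∫ l in Ioc 0 1, |β (s⁻¹ * l)| :=
    setIntegral_mono_set hint (.of_forall fun l => abs_nonneg _)
      (Ioc_subset_Ioc_left hs.1.le).eventuallyLE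
  have hboundary : 0 ≤ |β 1| * s + |β s⁻¹| := by have := hs.1; positivity
  simp only [Real.norm_eq_abs, Real.coe_toNNReal _ hsup, smul_eq_mul] at hbound
  refine (le_of_eq_of_le ?_ hbound).trans (by gcongr; exact half_le_self hsup)
  congr! 3
  ring
end
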